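/- arXiv:2106.06635 — 6 statements merged into one kernel-verified Lean document; each statement's English description precedes it below -/
import Mathlib

section
/- Fix integers K ≥ 2, N ≥ 1, t ≥ 1, a user i ∈ Fin K, and set S := (Fin K) \ {i}. Let d : Fin K → Fin N be a demand vector, let V be a vector space over GF(2), and for each file q ∈ Fin N and each (t+1)-element subset C ⊆ Fin K with i ∈ C let W_{q,C} ∈ V be an arbitrary vector. For each t-element subset A ⊆ S define the codeword Y_A := Σ_{k ∈ A} W_{d(k), (A ∪ {i}) \ {k}} (sum in V). Then for every (t+1)-element subset B ⊆ S: Σ_{k ∈ B} Y_{B \ {k}} = Σ_{(j,k) : j, k ∈ B, j ≠ k, d(j) ≠ d(k)} W_{d(j), (B ∪ {i}) \ {j, k}}, where the right-hand sum ranges over ordered pairs. -/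
/-!
For `i ∉ B`, the sum of the codewords of the sets `B \ {k}` runs over all ordered pairs of distinct
users `j, k ∈ B`. The sub-piece at `(j, k)` depends only on `d j` and the unordered pair `{j, k}`,
so when `d j = d k` it occurs a second time at `(k, j)`, and the two copies cancel over `GF(2)`.
-/

section OffDiagonalSums

variable {α M : Type*}

theorem sum_sum_erase_eq_sum_offDiag [DecidableEq α] [AddCommMonoid M] (s : Finset α)
    (f : α → α → M) :
    ∑ b ∈ s, ∑ a ∈ s.erase b, f a b = ∑ p ∈ s.offDiag, f p.1 p.2 :=
  (Finset.sum_finset_product_right' s.offDiag s s.erase fun p => by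
    simp only [Finset.mem_offDiag, Finset.mem_erase]; tauto).symm

theorem sum_eq_zero_of_add_swap_eq_zero [AddCommMonoid M] {s : Finset (α × α)} {f : α × α → M}
    (hne : ∀ p ∈ s, p.1 ≠ p.2) (hs : ∀ p ∈ s, p.swap ∈ s)
    (hf : ∀ p ∈ s, f p + f p.swap = 0) : ∑ p ∈ s, f p = 0 :=
  Finset.sum_involution (fun p _ => p.swap) hf
    (fun p hp _ hswap => hne p hp (congrArg Prod.snd hswap)) hs fun p _ => p.swap_swap

end OffDiagonalSums

section Codeword

variable {ι κ V : Type*} [DecidableEq ι]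

/-- The codeword `Y_A` sent by user `i` to the users in `A`, for the demands `d`. The vector `W q C`
is the sub-piece of file `q` cached exclusively by the users in `C`; addition in `V` plays the role
of the XOR. -/
def codeword [AddCommMonoid V] (i : ι) (d : ι → κ) (W : κ → Finset ι → V) (A : Finset ι) : V :=
  ∑ k ∈ A, W (d k) (insert i A \ {k})

theorem insert_erase_sdiff_singleton {i k : ι} (hik : i ≠ k) (B : Finset ι) (j : ι) :
    insert i (B.erase k) \ {j} = insert i B \ {j, k} := by
  rw [← Finset.erase_insert_of_ne hik, Finset.erase_sdiff_comm, ← Finset.sdiff_insert,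
    Finset.pair_comm]

theorem sum_codeword_eq_sum_offDiag [AddCommMonoid V] {i : ι} {B : Finset ι} (hi : i ∉ B)
    (d : ι → κ) (W : κ → Finset ι → V) :
    ∑ k ∈ B, codeword i d W (B \ {k}) =
      ∑ p ∈ B.offDiag, W (d p.1) (insert i B \ {p.1, p.2}) := by
  rw [← sum_sum_erase_eq_sum_offDiag B fun j k => W (d j) (insert i B \ {j, k})]
  refine Finset.sum_congr rfl fun k hk => ?_
  have hik : i ≠ k := (ne_of_mem_of_not_mem hk hi).symm
  simp only [codeword, Finset.sdiff_singleton_eq_erase k, insert_erase_sdiff_singleton hik]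

variable [DecidableEq κ] [AddCommGroup V] [Module (ZMod 2) V]

theorem sum_offDiag_equal_demand_eq_zero (B C : Finset ι) (d : ι → κ)
    (W : κ → Finset ι → V) :
    ∑ p ∈ B.offDiag with d p.1 = d p.2, W (d p.1) (C \ {p.1, p.2}) = 0 := by
  refine sum_eq_zero_of_add_swap_eq_zero ?_ ?_ ?_ <;>
    simp only [Prod.forall, Prod.swap_prod_mk, Finset.mem_filter, Finset.mem_offDiag] <;>
    rintro j k ⟨⟨hj, hk, hjk⟩, hd⟩
  · exact hjk
  · exact ⟨⟨hk, hj, hjk.symm⟩, hd.symm⟩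
  · rw [← hd, Finset.pair_comm k j, ZModModule.add_self]

theorem stmt_4_general {i : ι} {B : Finset ι} (hi : i ∉ B) (d : ι → κ) (W : κ → Finset ι → V) :
    ∑ k ∈ B, codeword i d W (B \ {k}) =
      ∑ p ∈ B ×ˢ B with p.1 ≠ p.2 ∧ d p.1 ≠ d p.2, W (d p.1) (insert i B \ {p.1, p.2}) := by
  have hpairs : {p ∈ B.offDiag | d p.1 ≠ d p.2} =
      {p ∈ B ×ˢ B | p.1 ≠ p.2 ∧ d p.1 ≠ d p.2} := by
    grind
  rw [sum_codeword_eq_sum_offDiag hi,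
    ← Finset.sum_filter_add_sum_filter_not _ fun p : ι × ι => d p.1 = d p.2,
    sum_offDiag_equal_demand_eq_zero, zero_add, hpairs]

end Codeword

/-- for the D2D codewords `Y A = ∑_{k ∈ A} W (d k) ((A ∪ {i}) \ {k})`
(sums in a GF(2) vector space `V`), and any `(t+1)`-subset `B` of `S = (Fin K) \ {i}`,
`∑_{k ∈ B} Y (B \ {k})` equals the ordered-pair sum
`∑_{(j,k) : j,k ∈ B, j ≠ k, d j ≠ d k} W (d j) ((B ∪ {i}) \ {j, k})`. -/
theorem stmt_4 (K N t : ℕ) (hK : 2 ≤ K) (hN : 1 ≤ N) (ht : 1 ≤ t)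
    (i : Fin K) (d : Fin K → Fin N)
    (V : Type*) [AddCommGroup V] [Module (ZMod 2) V]
    (W : Fin N → Finset (Fin K) → V)
    (Y : Finset (Fin K) → V)
    (hY : ∀ A : Finset (Fin K), A ⊆ Finset.univ.erase i → A.card = t →
      Y A = ∑ k ∈ A, W (d k) (insert i A \ {k}))
    (B : Finset (Fin K)) (hBS : B ⊆ Finset.univ.erase i) (hBcard : B.card = t + 1) :
    ∑ k ∈ B, Y (B \ {k}) =
      ∑ p ∈ (B ×ˢ B).filter (fun p : Fin K × Fin K => p.1 ≠ p.2 ∧ d p.1 ≠ d p.2),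
        W (d p.1) (insert i B \ ({p.1, p.2} : Finset (Fin K))) := by
  rw [← stmt_4_general (fun hiB => Finset.notMem_erase i _ (hBS hiB)) d W]
  exact Finset.sum_congr rfl fun k hk => hY _ (Finset.sdiff_subset.trans hBS) <| by
    rw [Finset.sdiff_singleton_eq_erase, Finset.card_erase_of_mem hk, hBcard, Nat.add_sub_cancel]
end

section
/- Let K, N, t be integers with N ≥ 1, K ≥ 2N, and 1 ≤ t ≤ K. For a demand vector d : Fin K → Fin N and a user k ∈ Fin K, let Ne_{\k}(d) denote the number of distinct values of d on (Fin K) \ {k}. Then the minimum over all demand vectors d : Fin K → Fin N of Σ_{k ∈ Fin K} C(K − 1 − Ne_{\k}(d), t) equals K · C(K − 1 − N, t). -/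
/-!
Deleting a user leaves at most `N` distinct demands, so every summand is at least `C(K−1−N, t)`.
Since `2N ≤ K`, some demand vector requests every file at least twice; then no single deletion
loses a file, and every summand attains this bound.
-/

open Finset

section Demand

variable {ι α : Type*}

theorem exists_ne_fst_eq_of_surjective {β : Type*} [Nontrivial β] {g : ι → α × β}
    (hg : Function.Surjective g) (k : ι) (a : α) : ∃ i ≠ k, (g i).1 = a := by
  obtain ⟨b, hb⟩ := exists_ne (g k).2
  obtain ⟨i, hi⟩ := hg (a, b)
  refine ⟨i, ?_, congrArg Prod.fst hi⟩
  rintro rfl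
  exact hb (congrArg Prod.snd hi).symm

variable [Fintype ι] [Fintype α] [DecidableEq ι] [DecidableEq α]

theorem exists_forall_image_erase_eq_univ [Nonempty α]
    (hcard : 2 * Fintype.card α ≤ Fintype.card ι) :
    ∃ d : ι → α, ∀ k, (univ.erase k).image d = univ := by
  have hcard_prod : Fintype.card (α × Bool) ≤ Fintype.card ι := by
    rwa [Fintype.card_prod, Fintype.card_bool, mul_comm]
  obtain ⟨copies⟩ := Function.Embedding.nonempty_of_card_le hcard_prod
  have hsurj := Function.invFun_surjective copies.injective
  refine ⟨fun i => (Function.invFun copies i).1, fun k => eq_univ_of_forall fun a => ?_⟩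
  obtain ⟨i, hik, hia⟩ := exists_ne_fst_eq_of_surjective hsurj k a
  exact mem_image.mpr ⟨i, mem_erase.mpr ⟨hik, mem_univ i⟩, hia⟩

theorem stmt_8_general {M : Type*} [AddCommMonoid M] [PartialOrder M] [IsOrderedAddMonoid M]
    [Nonempty α] (hcard : 2 * Fintype.card α ≤ Fintype.card ι) {f : ℕ → M} (hf : Antitone f) :
    IsLeast {x : M | ∃ d : ι → α, x = ∑ k, f ((univ.erase k).image d).card}
      (Fintype.card ι • f (Fintype.card α)) := by
  constructor
  · obtain ⟨d, hd⟩ := exists_forall_image_erase_eq_univ hcard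
    exact ⟨d, by simp only [hd, card_univ, sum_const]⟩
  · rintro _ ⟨d, rfl⟩
    exact card_nsmul_le_sum univ _ _ fun k _ => hf (card_le_univ _)

end Demand

theorem antitone_choose_sub (n t : ℕ) : Antitone fun m => (n - m).choose t :=
  fun _ _ h => Nat.choose_le_choose t (Nat.sub_le_sub_left h n)

/-- for `N ≥ 1`, `K ≥ 2N`, `1 ≤ t ≤ K`, the minimum over demand vectors
`d : Fin K → Fin N` of `∑_k C(K−1−Ne_{\k}(d), t)` equals `K · C(K−1−N, t)`, where
`Ne_{\k}(d)` is the number of distinct values of `d` on `(Fin K) \ {k}`. -/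
theorem stmt_8 (K N t : ℕ) (hN : 1 ≤ N) (hK : 2 * N ≤ K) (ht : 1 ≤ t) (htK : t ≤ K) :
    IsLeast {x : ℕ | ∃ d : Fin K → Fin N,
        x = ∑ k : Fin K,
          Nat.choose (K - 1 - ((Finset.univ.erase k).image d).card) t}
      (K * Nat.choose (K - 1 - N) t) := by
  have : Nonempty (Fin N) := ⟨⟨0, hN⟩⟩
  simpa using stmt_8_general (ι := Fin K) (α := Fin N) (by simpa using hK)
    (antitone_choose_sub (K - 1) t)
end

section
/- Let K, N, t be integers with 1 ≤ t ≤ K and N < K < 2N. For a demand vector d : Fin K → Fin N and a user k ∈ Fin K, let Ne_{\k}(d) denote the number of distinct values of d on (Fin K) \ {k}. Then the minimum over all demand vectors d : Fin K → Fin N of Σ_{k ∈ Fin K} C(K − 1 − Ne_{\k}(d), t) equals (2N − K) · C(K − N, t) + 2(K − N) · C(K − 1 − N, t). -/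
/-!
Let `d` request `m` distinct files and let `u` users be alone in requesting their file. Deleting a
user lowers the number of distinct files by one exactly when the user is alone, so the sum equals
`u * C(K - m, t) + (K - u) * C(K - 1 - m, t)`. If every file is requested, `u ≥ 2N - K`, since all
other requested files have at least two users; if some file is not, every summand is already at
least `C(K - N, t)`. Requesting the files cyclically attains `m = N` and the least
possible `u`: user `i` shares a file with user `i + N` or `i - N` unless `K - N ≤ i < N`.
-/

section Demand

open Finset Fintype

theorem mul_add_tsub_mul_le {u v n a b : ℕ} (huv : u ≤ v) (hvn : v ≤ n) (hba : b ≤ a) :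
    u * a + (n - u) * b ≤ v * a + (n - v) * b := by
  obtain ⟨w, rfl⟩ := Nat.exists_eq_add_of_le huv
  have hsplit : n - u = w + (n - (u + w)) := by omega
  calc u * a + (n - u) * b = u * a + w * b + (n - (u + w)) * b := by rw [hsplit]; ring
    _ ≤ u * a + w * a + (n - (u + w)) * b := by gcongr
    _ = (u + w) * a + (n - (u + w)) * b := by ring

variable {ι α : Type*} [Fintype ι]

section CyclicDemand

variable [Fintype α] [Nonempty α]

variable (ι α) in
/-- The demand under which the users, in some order, request the files in cyclic order. -/
noncomputable def cyclicDemand (k : ι) : α :=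
  (equivFin α).symm (Fin.ofNat (card α) (equivFin ι k))

theorem cyclicDemand_eq_iff {j k : ι} :
    cyclicDemand ι α j = cyclicDemand ι α k ↔
      (equivFin ι j : ℕ) ≡ equivFin ι k [MOD card α] := by
  rw [cyclicDemand, cyclicDemand, Equiv.apply_eq_iff_eq, Fin.ext_iff]
  rfl

theorem cyclicDemand_surjective (hcard : card α ≤ card ι) :
    (cyclicDemand ι α).Surjective := by
  intro v
  refine ⟨(equivFin ι).symm (Fin.castLE hcard (equivFin α v)), ?_⟩
  simp [cyclicDemand]

end CyclicDemand

variable [DecidableEq ι] [DecidableEq α]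

/-- The number `Ne_{\k}(d)` of distinct files requested under the demand `d` by the users other
than `k`. -/
def numFilesExcept (d : ι → α) (k : ι) : ℕ :=
  #((univ.erase k).image d)

/-- The users whose requested file is requested by nobody else. -/
def soleRequesters (d : ι → α) : Finset ι :=
  {k | d k ∉ (univ.erase k).image d}

/-- The sum `∑ k, C(K - 1 - Ne_{\k}(d), t)` over the `K` users. With `S` for this sum, the D2D
one-shot load of the demand `d` is `(C(K - 1, t) - S / K) / C(K - 1, t - 1)`, so the worst-case
demands are those minimizing `S`. -/
def loadReduction (d : ι → α) (t : ℕ) : ℕ :=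
  ∑ k, (card ι - 1 - numFilesExcept d k).choose t

theorem mem_soleRequesters {d : ι → α} {k : ι} :
    k ∈ soleRequesters d ↔ ∀ j, d j = d k → j = k := by
  simp only [soleRequesters, mem_filter_univ, mem_image, mem_erase, mem_univ, and_true,
    not_exists, not_and']
  exact forall₂_congr fun _ _ => not_not

theorem image_univ_eq_insert (d : ι → α) (k : ι) :
    univ.image d = insert (d k) ((univ.erase k).image d) := by
  rw [← image_insert, insert_erase (mem_univ k)]

theorem numFilesExcept_le (d : ι → α) (k : ι) : numFilesExcept d k ≤ #(univ.image d) :=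
  card_le_card (image_subset_image (erase_subset k univ))

theorem numFilesExcept_add_one {d : ι → α} {k : ι} (hk : k ∈ soleRequesters d) :
    numFilesExcept d k + 1 = #(univ.image d) := by
  rw [image_univ_eq_insert d k, card_insert_of_notMem ((mem_filter_univ k).mp hk),
    numFilesExcept]

theorem numFilesExcept_of_notMem {d : ι → α} {k : ι} (hk : k ∉ soleRequesters d) :
    numFilesExcept d k = #(univ.image d) := by
  have hmem : d k ∈ (univ.erase k).image d := by
    simpa only [soleRequesters, mem_filter_univ, not_not] using hk
  rw [image_univ_eq_insert d k, insert_eq_of_mem hmem, numFilesExcept]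

theorem loadReduction_eq (d : ι → α) (t : ℕ) :
    loadReduction d t = #(soleRequesters d) * (card ι - #(univ.image d)).choose t
      + (card ι - #(soleRequesters d)) * (card ι - 1 - #(univ.image d)).choose t := by
  have hsole : ∀ k ∈ soleRequesters d,
      (card ι - 1 - numFilesExcept d k).choose t = (card ι - #(univ.image d)).choose t := by
    intro k hk
    rw [← numFilesExcept_add_one hk, Nat.sub_sub, Nat.add_comm]
  have hshared : ∀ k ∈ (soleRequesters d)ᶜ,
      (card ι - 1 - numFilesExcept d k).choose t = (card ι - 1 - #(univ.image d)).choose t := by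
    intro k hk
    rw [numFilesExcept_of_notMem (mem_compl.mp hk)]
  rw [loadReduction, ← sum_add_sum_compl (soleRequesters d), sum_const_nat hsole,
    sum_const_nat hshared, card_compl]

theorem two_mul_card_image_compl_soleRequesters_le (d : ι → α) :
    2 * #((soleRequesters d)ᶜ.image d) ≤ #(soleRequesters d)ᶜ := by
  refine mul_card_image_le_card _ 2 fun v hv => ?_
  obtain ⟨k, hk, rfl⟩ := mem_image.mp hv
  obtain ⟨j, hjk, hne⟩ : ∃ j, d j = d k ∧ j ≠ k := by
    simpa only [mem_compl, mem_soleRequesters, not_forall, exists_prop] using hk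
  have hj : j ∈ (soleRequesters d)ᶜ :=
    mem_compl.mpr fun hj => hne (mem_soleRequesters.mp hj k hjk.symm).symm
  exact one_lt_card.mpr ⟨j, mem_filter.mpr ⟨hj, hjk⟩, k, mem_filter.mpr ⟨hk, rfl⟩, hne⟩

theorem two_mul_card_image_le (d : ι → α) :
    2 * #(univ.image d) ≤ card ι + #(soleRequesters d) := by
  have himage : #(univ.image d) ≤ #(soleRequesters d) + #((soleRequesters d)ᶜ.image d) := by
    rw [← union_compl (soleRequesters d), image_union]
    exact (card_union_le _ _).trans (Nat.add_le_add_right card_image_le _)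
  have hshared := two_mul_card_image_compl_soleRequesters_le d
  have hcompl := card_add_card_compl (soleRequesters d)
  omega

variable [Fintype α]

theorem two_mul_card_sub_le_card_soleRequesters {d : ι → α} (hd : d.Surjective) :
    2 * card α - card ι ≤ #(soleRequesters d) := by
  have hcount := two_mul_card_image_le d
  rw [image_univ_of_surjective hd, card_univ] at hcount
  omega

theorem card_mul_choose_le_loadReduction_of_not_surjective {d : ι → α}
    (hd : ¬ d.Surjective) (t : ℕ) :
    card ι * (card ι - card α).choose t ≤ loadReduction d t := by
  have himage : #(univ.image d) < card α :=
    (card_lt_iff_ne_univ _).mpr fun himage => hd fun v =>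
      mem_image_univ_iff_mem_range.mp (eq_univ_iff_forall.mp himage v)
  rw [← card_univ (α := ι), ← smul_eq_mul]
  refine card_nsmul_le_sum _ _ _ fun k _ => Nat.choose_le_choose t ?_
  have hk := numFilesExcept_le d k
  rw [card_univ]
  omega

theorem le_loadReduction (hcard : card α ≤ card ι) (d : ι → α) (t : ℕ) :
    (2 * card α - card ι) * (card ι - card α).choose t
      + (card ι - (2 * card α - card ι)) * (card ι - 1 - card α).choose t
      ≤ loadReduction d t := by
  have hchoose : (card ι - 1 - card α).choose t ≤ (card ι - card α).choose t :=
    Nat.choose_le_choose t (by omega)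
  by_cases hd : d.Surjective
  · rw [loadReduction_eq, image_univ_of_surjective hd, card_univ]
    exact mul_add_tsub_mul_le (two_mul_card_sub_le_card_soleRequesters hd) (card_le_univ _) hchoose
  · refine le_trans ?_ (card_mul_choose_le_loadReduction_of_not_surjective hd t)
    simpa only [Nat.sub_self, Nat.zero_mul, Nat.add_zero] using
      mul_add_tsub_mul_le (by omega : 2 * card α - card ι ≤ card ι) le_rfl hchoose

variable [Nonempty α]

theorem mem_Ico_of_mem_soleRequesters_cyclicDemand {k : ι}
    (hk : k ∈ soleRequesters (cyclicDemand ι α)) :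
    (equivFin ι k : ℕ) ∈ Ico (card ι - card α) (card α) := by
  have hunique : ∀ i : Fin (card ι), (i : ℕ) ≡ equivFin ι k [MOD card α] → i = equivFin ι k := by
    intro i hi
    rw [← Equiv.symm_apply_eq]
    exact mem_soleRequesters.mp hk _ (cyclicDemand_eq_iff.mpr (by simpa using hi))
  have hpos : 0 < card α := card_pos
  have hlt := (equivFin ι k).isLt
  refine mem_Ico.mpr ⟨?_, ?_⟩ <;> by_contra! hout
  · have hmod : (equivFin ι k : ℕ) + card α ≡ equivFin ι k [MOD card α] :=
      Nat.add_mod_right _ _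
    have hval := Fin.val_eq_of_eq (hunique ⟨equivFin ι k + card α, by omega⟩ hmod)
    dsimp only at hval
    omega
  · have hmod : (equivFin ι k : ℕ) - card α ≡ equivFin ι k [MOD card α] :=
      (Nat.mod_eq_sub_mod hout).symm
    have hval := Fin.val_eq_of_eq (hunique ⟨equivFin ι k - card α, by omega⟩ hmod)
    dsimp only at hval
    omega

theorem card_soleRequesters_cyclicDemand (hcard : card α ≤ card ι) :
    #(soleRequesters (cyclicDemand ι α)) = 2 * card α - card ι := by
  refine le_antisymm ?_ (two_mul_card_sub_le_card_soleRequesters (cyclicDemand_surjective hcard))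
  calc #(soleRequesters (cyclicDemand ι α)) ≤ #(Ico (card ι - card α) (card α)) :=
        card_le_card_of_injOn (fun k => (equivFin ι k : ℕ))
          (fun _ hk => mem_Ico_of_mem_soleRequesters_cyclicDemand hk)
          (Fin.val_injective.comp (equivFin ι).injective).injOn
    _ = 2 * card α - card ι := by rw [Nat.card_Ico]; omega

-- The truncated `2N - K` is the number of sole requesters: it is `0` as soon as `K ≥ 2N`.
theorem stmt_9_general (hcard : card α ≤ card ι) (t : ℕ) :
    IsLeast (Set.range fun d : ι → α => loadReduction d t)
      ((2 * card α - card ι) * (card ι - card α).choose t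
        + (card ι - (2 * card α - card ι)) * (card ι - 1 - card α).choose t) := by
  refine ⟨⟨cyclicDemand ι α, ?_⟩, Set.forall_mem_range.mpr fun d => le_loadReduction hcard d t⟩
  dsimp only
  rw [loadReduction_eq, card_soleRequesters_cyclicDemand hcard,
    image_univ_of_surjective (cyclicDemand_surjective hcard), card_univ]

end Demand

/-- for `1 ≤ t ≤ K` and `N < K < 2N`, the minimum over demand vectors
`d : Fin K → Fin N` of `∑_k C(K−1−Ne_{\k}(d), t)` equals
`(2N−K)·C(K−N, t) + 2(K−N)·C(K−1−N, t)`, where `Ne_{\k}(d)` is the number of distinct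
values of `d` on `(Fin K) \ {k}`. -/
theorem stmt_9 (K N t : ℕ) (ht : 1 ≤ t) (htK : t ≤ K) (hNK : N < K) (hK2N : K < 2 * N) :
    IsLeast {x : ℕ | ∃ d : Fin K → Fin N,
        x = ∑ k : Fin K,
          Nat.choose (K - 1 - ((Finset.univ.erase k).image d).card) t}
      ((2 * N - K) * Nat.choose (K - N) t
        + 2 * (K - N) * Nat.choose (K - 1 - N) t) := by
  have : NeZero N := ⟨by omega⟩
  rw [show 2 * (K - N) = K - (2 * N - K) by omega]
  simpa only [Set.range, eq_comm, loadReduction, numFilesExcept, Fintype.card_fin] using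
    stmt_9_general (ι := Fin K) (α := Fin N) (by simpa using hNK.le) t
end

section
/- Let K, N, t be integers with N ≥ 1 and 1 ≤ t ≤ K. For a demand vector d : Fin K → Fin N, let Ne(d) denote the number of distinct values of d on Fin K, and for k ∈ Fin K let Ne_{\k}(d) denote the number of distinct values of d on (Fin K) \ {k}. Then for every demand vector d : Fin K → Fin N, (C(K−1, t) − (1/K)·Σ_{k ∈ Fin K} C(K − 1 − Ne_{\k}(d), t)) / C(K−1, t−1) ≤ 2 · (C(K, t+1) − C(K − Ne(d), t+1)) / C(K, t), as an inequality of real numbers. -/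
/-!
Write `m` and `mₖ` for the number of distinct demands of all the users and of all the users but
`k`. By the absorption identity `n * C(n - 1, k - 1) = k * C(n, k)`, the D2D load equals
`((t + 1) * C(K, t + 1) - ∑ₖ C(K - 1 - mₖ, t)) / (t * C(K, t))`. Since `mₖ ≤ m`, the sum is at least
`K * C(K - 1 - m, t)`, which by absorption again is at least `(t + 1) * C(K - m, t + 1)`. Hence the
D2D load is at most `(t + 1) / t ≤ 2` times the shared-link load.
-/

theorem mul_choose_pred_eq (n : ℕ) {k : ℕ} (hk : 1 ≤ k) :
    n * (n - 1).choose (k - 1) = k * n.choose k := by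
  simpa only [Nat.choose_one_right, mul_comm] using (Nat.choose_mul (n := n) hk).symm

theorem succ_mul_choose_sub_le (n m k : ℕ) :
    (k + 1) * (n - m).choose (k + 1) ≤ n * (n - 1 - m).choose k :=
  calc (k + 1) * (n - m).choose (k + 1)
    _ = (n - m) * (n - m - 1).choose k := (mul_choose_pred_eq (n - m) k.succ_pos).symm
    _ ≤ n * (n - m - 1).choose k := Nat.mul_le_mul_right _ (Nat.sub_le n m)
    _ = n * (n - 1 - m).choose k := by rw [Nat.sub_right_comm]

section Loads

open Finset

variable {ι α : Type*} [Fintype ι] [DecidableEq α]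

/-- The optimal load, under uncoded placement, of the shared-link caching system whose users `ι`
request the files `d`. The parameter `t = KM/N` is the number of users caching each subfile, and
`Ne(d)` is the cardinality of the image of `d`. -/
noncomputable def sharedLinkLoad (d : ι → α) (t : ℕ) : ℝ :=
  (((Fintype.card ι).choose (t + 1) : ℝ)
      - ((Fintype.card ι - (univ.image d).card).choose (t + 1) : ℝ)) /
    ((Fintype.card ι).choose t : ℝ)

theorem sharedLinkLoad_nonneg (d : ι → α) (t : ℕ) : 0 ≤ sharedLinkLoad d t := by
  refine div_nonneg (sub_nonneg.2 ?_) (Nat.cast_nonneg _)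
  exact_mod_cast Nat.choose_le_choose (t + 1) (Nat.sub_le _ _)

variable [DecidableEq ι]

/-- The optimal load, under uncoded placement and one-shot delivery, of the device-to-device caching
system whose users `ι` request the files `d`, with `t` as in `sharedLinkLoad`. The number
`Ne_{\k}(d)` of files requested by the users other than `k` is the cardinality of the image of
`univ.erase k` under `d`. The formula is meaningful for `1 ≤ t` only, `t - 1` being truncated. -/
noncomputable def d2dLoad (d : ι → α) (t : ℕ) : ℝ :=
  (((Fintype.card ι - 1).choose t : ℝ) - (1 / (Fintype.card ι : ℝ)) * ∑ k : ι,
      ((Fintype.card ι - 1 - ((univ.erase k).image d).card).choose t : ℝ)) /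
    ((Fintype.card ι - 1).choose (t - 1) : ℝ)

theorem card_mul_choose_sub_card_image_le_sum (d : ι → α) (n t : ℕ) :
    Fintype.card ι * (n - (univ.image d).card).choose t ≤
      ∑ k : ι, (n - ((univ.erase k).image d).card).choose t := by
  refine card_nsmul_le_sum univ _ _ fun k _ ↦ Nat.choose_le_choose t (Nat.sub_le_sub_left ?_ n)
  exact card_le_card (image_subset_image (erase_subset k univ))

theorem succ_mul_choose_sub_card_image_le_sum (d : ι → α) (t : ℕ) :
    (t + 1) * (Fintype.card ι - (univ.image d).card).choose (t + 1) ≤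
      ∑ k : ι, (Fintype.card ι - 1 - ((univ.erase k).image d).card).choose t :=
  (succ_mul_choose_sub_le _ _ t).trans (card_mul_choose_sub_card_image_le_sum d _ t)

theorem d2dLoad_eq_div [Nonempty ι] (d : ι → α) {t : ℕ} (ht : 1 ≤ t) :
    d2dLoad d t =
      ((t + 1) * ((Fintype.card ι).choose (t + 1) : ℝ) - ∑ k : ι,
          ((Fintype.card ι - 1 - ((univ.erase k).image d).card).choose t : ℝ)) /
        (t * ((Fintype.card ι).choose t : ℝ)) := by
  have card_ne_zero : (Fintype.card ι : ℝ) ≠ 0 := Nat.cast_ne_zero.2 Fintype.card_ne_zero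
  have numerator : (Fintype.card ι : ℝ) * ((Fintype.card ι - 1).choose t : ℝ) =
      (t + 1) * ((Fintype.card ι).choose (t + 1) : ℝ) :=
    mod_cast mul_choose_pred_eq (Fintype.card ι) t.succ_pos
  have denominator : (Fintype.card ι : ℝ) * ((Fintype.card ι - 1).choose (t - 1) : ℝ) =
      t * ((Fintype.card ι).choose t : ℝ) :=
    mod_cast mul_choose_pred_eq (Fintype.card ι) ht
  rw [d2dLoad, ← mul_div_mul_left _ _ card_ne_zero, mul_sub, numerator, denominator, ← mul_assoc,
    mul_one_div_cancel card_ne_zero, one_mul]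

theorem stmt_10_general (d : ι → α) {t : ℕ} (ht : 1 ≤ t) (htK : t ≤ Fintype.card ι) :
    d2dLoad d t ≤ (1 + 1 / (t : ℝ)) * sharedLinkLoad d t := by
  have : Nonempty ι := Fintype.card_pos_iff.1 (ht.trans htK)
  have t_ne_zero : (t : ℝ) ≠ 0 := Nat.cast_ne_zero.2 (Nat.one_le_iff_ne_zero.1 ht)
  have sum_bound : (t + 1) * ((Fintype.card ι - (univ.image d).card).choose (t + 1) : ℝ) ≤
      ∑ k : ι, ((Fintype.card ι - 1 - ((univ.erase k).image d).card).choose t : ℝ) :=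
    mod_cast succ_mul_choose_sub_card_image_le_sum d t
  calc d2dLoad d t
    _ = ((t + 1) * ((Fintype.card ι).choose (t + 1) : ℝ) - ∑ k : ι,
            ((Fintype.card ι - 1 - ((univ.erase k).image d).card).choose t : ℝ)) /
          (t * ((Fintype.card ι).choose t : ℝ)) := d2dLoad_eq_div d ht
    _ ≤ ((t + 1) * ((Fintype.card ι).choose (t + 1) : ℝ) -
            (t + 1) * ((Fintype.card ι - (univ.image d).card).choose (t + 1) : ℝ)) /
          (t * ((Fintype.card ι).choose t : ℝ)) := by gcongr
    _ = (1 + 1 / (t : ℝ)) * sharedLinkLoad d t := by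
      rw [sharedLinkLoad, ← mul_sub, mul_div_mul_comm, add_div, div_self t_ne_zero]

theorem d2dLoad_le_two_mul_sharedLinkLoad (d : ι → α) {t : ℕ} (ht : 1 ≤ t)
    (htK : t ≤ Fintype.card ι) : d2dLoad d t ≤ 2 * sharedLinkLoad d t := by
  have factor_le_two : 1 + 1 / (t : ℝ) ≤ 2 := by
    linarith [(div_le_one (by positivity)).2 (Nat.one_le_cast (α := ℝ).2 ht)]
  exact (stmt_10_general d ht htK).trans
    (mul_le_mul_of_nonneg_right factor_le_two (sharedLinkLoad_nonneg d t))

end Loads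

/-- for every demand vector `d : Fin K → Fin N`, the optimal one-shot D2D
load `(C(K−1,t) − (1/K)·∑_k C(K−1−Ne_{\k}(d), t)) / C(K−1,t−1)` is at most twice the
optimal shared-link load `(C(K,t+1) − C(K−Ne(d),t+1)) / C(K,t)`, where `Ne(d)` is the
number of distinct values of `d` on `Fin K` and `Ne_{\k}(d)` that on `(Fin K) \ {k}`. -/
theorem stmt_10 (K N t : ℕ) (hN : 1 ≤ N) (ht : 1 ≤ t) (htK : t ≤ K)
    (d : Fin K → Fin N) :
    ((Nat.choose (K - 1) t : ℝ) - (1 / (K : ℝ)) * ∑ k : Fin K,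
        (Nat.choose (K - 1 - ((Finset.univ.erase k).image d).card) t : ℝ)) /
      (Nat.choose (K - 1) (t - 1) : ℝ)
    ≤ 2 * (((Nat.choose K (t + 1) : ℝ)
          - (Nat.choose (K - (Finset.univ.image d).card) (t + 1) : ℝ)) /
        (Nat.choose K t : ℝ)) := by
  simpa only [d2dLoad, sharedLinkLoad, Fintype.card_fin] using
    d2dLoad_le_two_mul_sharedLinkLoad d ht (htK.trans_eq (Fintype.card_fin K).symm)
end

section
/- Let K ≥ 2 and n be integers with 0 ≤ n ≤ K − 1, and define the real-valued sequence g(t) := (C(K−1, t) − C(K−1−n, t)) / C(K−1, t−1) for t ∈ {1, …, K}. Then (i) g is non-increasing: g(t+1) ≤ g(t) for 1 ≤ t ≤ K−1, and (ii) g is convex as a sequence: g(t−1) + g(t+1) ≥ 2·g(t) for 2 ≤ t ≤ K−1. -/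
/-- The per-transmitter load sequence `g(t) = (C(K−1,t) − C(K−1−n,t)) / C(K−1,t−1)`. -/
noncomputable def loadSeq (K n : ℕ) (t : ℕ) : ℝ :=
  ((Nat.choose (K - 1) t : ℝ) - (Nat.choose (K - 1 - n) t : ℝ)) /
    (Nat.choose (K - 1) (t - 1) : ℝ)

/-! By Pascal's rule `C(m, s + 1) - C(p, s + 1) = ∑_{p ≤ j < m} C(j, s)`, so with `m = K - 1` the
load `g(s + 1)` is a sum of ratios `C(j, s) / C(m, s)` with `j < m`. Each ratio equals
`C(m - s, m - j) / C(m, j)`, where `s` enters only through the upper index of a binomial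
coefficient, and `x ↦ C(x, k)` is monotone and convex. -/

theorem choose_mul_choose_eq_choose_mul_choose_sub {j m : ℕ} (hj : j ≤ m) (s : ℕ) :
    m.choose j * j.choose s = m.choose s * (m - s).choose (m - j) := by
  rcases le_or_gt s j with hs | hs
  · rw [Nat.choose_mul hs, Nat.choose_symm_of_eq_add (show m - s = (j - s) + (m - j) by lia)]
  · rcases le_or_gt s m with hsm | hsm
    · rw [Nat.choose_eq_zero_of_lt hs, Nat.choose_eq_zero_of_lt (show m - s < m - j by lia),
        mul_zero, mul_zero]
    · rw [Nat.choose_eq_zero_of_lt hs, Nat.choose_eq_zero_of_lt hsm, mul_zero, zero_mul]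

theorem choose_div_choose_eq_choose_sub_div_choose {𝕜 : Type*} [Field 𝕜] [CharZero 𝕜] {j m s : ℕ}
    (hj : j ≤ m) (hs : s ≤ m) :
    (j.choose s / m.choose s : 𝕜) = (m - s).choose (m - j) / m.choose j := by
  have hs₀ : (m.choose s : 𝕜) ≠ 0 := Nat.cast_ne_zero.2 (Nat.choose_ne_zero hs)
  have hj₀ : (m.choose j : 𝕜) ≠ 0 := Nat.cast_ne_zero.2 (Nat.choose_ne_zero hj)
  rw [div_eq_div_iff hs₀ hj₀, mul_comm, mul_comm ((m - s).choose (m - j) : 𝕜)]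
  exact_mod_cast choose_mul_choose_eq_choose_mul_choose_sub hj s

theorem two_mul_choose_succ_le_choose_add_choose (x k : ℕ) :
    2 * (x + 1).choose k ≤ x.choose k + (x + 2).choose k := by
  cases k with
  | zero => simp
  | succ k =>
    have hmono : x.choose k ≤ (x + 1).choose k := Nat.choose_le_succ x k
    have hpascal : (x + 1).choose (k + 1) = x.choose k + x.choose (k + 1) :=
      Nat.choose_succ_succ x k
    have hpascal' : (x + 2).choose (k + 1) = (x + 1).choose k + (x + 1).choose (k + 1) :=
      Nat.choose_succ_succ (x + 1) k
    lia

section LinearOrderedField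

variable {𝕜 : Type*} [Field 𝕜] [LinearOrder 𝕜] [IsStrictOrderedRing 𝕜] {j m : ℕ}

theorem antitoneOn_choose_div_choose (hj : j ≤ m) :
    AntitoneOn (fun s : ℕ ↦ (j.choose s / m.choose s : 𝕜)) (Set.Iic m) := by
  intro s hs t ht hst
  simp only [choose_div_choose_eq_choose_sub_div_choose hj hs,
    choose_div_choose_eq_choose_sub_div_choose hj ht]
  gcongr

theorem two_mul_choose_div_choose_succ_le {s : ℕ} (hj : j ≤ m) (hs : s + 2 ≤ m) :
    (2 * (j.choose (s + 1) / m.choose (s + 1)) : 𝕜) ≤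
      j.choose s / m.choose s + j.choose (s + 2) / m.choose (s + 2) := by
  obtain ⟨x, rfl⟩ := Nat.exists_eq_add_of_le' hs
  rw [choose_div_choose_eq_choose_sub_div_choose hj (by lia),
    choose_div_choose_eq_choose_sub_div_choose hj (by lia),
    choose_div_choose_eq_choose_sub_div_choose hj hs, ← mul_div_assoc, ← add_div,
    show x + (s + 2) - (s + 1) = x + 1 by lia, show x + (s + 2) - s = x + 2 by lia,
    Nat.add_sub_cancel, add_comm ((x + 2).choose _ : 𝕜)]
  gcongr
  exact_mod_cast two_mul_choose_succ_le_choose_add_choose x _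

end LinearOrderedField

theorem sum_Ico_choose_eq_choose_succ_sub {R : Type*} [AddCommGroupWithOne R] {p m : ℕ}
    (h : p ≤ m) (s : ℕ) :
    ∑ j ∈ Finset.Ico p m, (j.choose s : R) = m.choose (s + 1) - p.choose (s + 1) := by
  rw [← Finset.sum_Ico_sub (fun j : ℕ ↦ (j.choose (s + 1) : R)) h]
  refine Finset.sum_congr rfl fun j _ ↦ ?_
  rw [Nat.choose_succ_succ, Nat.cast_add, add_sub_cancel_right]

theorem loadSeq_succ_eq_sum (K n s : ℕ) :
    loadSeq K n (s + 1) =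
      ∑ j ∈ Finset.Ico (K - 1 - n) (K - 1), (j.choose s / (K - 1).choose s : ℝ) := by
  rw [loadSeq, ← sum_Ico_choose_eq_choose_succ_sub (Nat.sub_le _ _), Finset.sum_div,
    Nat.add_sub_cancel]

/-- for `K ≥ 2` and `0 ≤ n ≤ K−1`, the sequence
`g(t) = (C(K−1,t) − C(K−1−n,t)) / C(K−1,t−1)`, `t ∈ {1,…,K}`, is
(i) non-increasing: `g(t+1) ≤ g(t)` for `1 ≤ t ≤ K−1`, and
(ii) convex: `g(t−1) + g(t+1) ≥ 2·g(t)` for `2 ≤ t ≤ K−1`. -/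
theorem stmt_11 (K n : ℕ) (hK : 2 ≤ K) (hn : n ≤ K - 1) :
    (∀ t : ℕ, 1 ≤ t → t ≤ K - 1 → loadSeq K n (t + 1) ≤ loadSeq K n t) ∧
    (∀ t : ℕ, 2 ≤ t → t ≤ K - 1 →
      loadSeq K n (t - 1) + loadSeq K n (t + 1) ≥ 2 * loadSeq K n t) := by
  constructor
  · intro t ht htK
    obtain ⟨s, rfl⟩ := Nat.exists_eq_add_of_le' ht
    rw [loadSeq_succ_eq_sum, loadSeq_succ_eq_sum]
    refine Finset.sum_le_sum fun j hj ↦ ?_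
    have hjK : j ≤ K - 1 := (Finset.mem_Ico.1 hj).2.le
    exact antitoneOn_choose_div_choose hjK (Nat.le_of_succ_le htK) htK s.le_succ
  · intro t ht htK
    obtain ⟨s, rfl⟩ := Nat.exists_eq_add_of_le' ht
    rw [show s + 2 - 1 = s + 1 from rfl, loadSeq_succ_eq_sum, loadSeq_succ_eq_sum,
      loadSeq_succ_eq_sum, ge_iff_le, Finset.mul_sum, ← Finset.sum_add_distrib]
    refine Finset.sum_le_sum fun j hj ↦ ?_
    have hjK : j ≤ K - 1 := (Finset.mem_Ico.1 hj).2.le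
    exact two_mul_choose_div_choose_succ_le hjK htK
end

section
/- Fix integers K ≥ 2, N ≥ 1. Say two demand vectors d, d' : Fin K → Fin N have the same composition if the multisets of multiplicities {|d⁻¹(q)| : q ∈ Fin N} and {|d'⁻¹(q)| : q ∈ Fin N} coincide, and let D_s denote the set of all demand vectors with a fixed composition s. For a demand vector d, a transmitter i, a user k ∉ V and a nonempty set V ⊆ (Fin K) \ {k} with i ∈ V, let A(d, i, k, V) be the number of enumerations u = (u_1, …, u_{K−1}) of (Fin K) \ {i} without repetition such that k occupies a leader position j of u and no element of V occupies a leader position j' ≤ j of u. Define b(q, V) := Σ_{d ∈ D_s} Σ_{k ∈ (Fin K) \ V : d(k) = q} Σ_{i ∈ V} A(d, i, k, V) for each file q ∈ Fin N and nonempty V ⊆ Fin K. Then b(q₁, V₁) = b(q₂, V₂) whenever |V₁| = |V₂|, for all files q₁, q₂ ∈ Fin N and nonempty subsets V₁, V₂ ⊆ Fin K. -/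
/-- The composition of a demand vector `d : Fin K → Fin N`: the multiset of
multiplicities `|d⁻¹(q)|`, `q ∈ Fin N`. -/
def demandComposition (K N : ℕ) (d : Fin K → Fin N) : Multiset ℕ :=
  (Finset.univ.val : Multiset (Fin N)).map
    fun q => (Finset.univ.filter fun k => d k = q).card

/-- `numEnum K N d i k V` is the number `A(d, i, k, V)` of enumerations
`u = (u_1, …, u_{K−1})` of `(Fin K) \ {i}` without repetition such that
(a) `k` occupies a leader position `j` of `u`, i.e. `u j = k` and `d (u j') ≠ d k`
for all `j' < j`, and
(b) no element of `V` occupies a leader position `j' ≤ j` of `u`. -/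
noncomputable def numEnum (K N : ℕ) (d : Fin K → Fin N) (i k : Fin K)
    (V : Finset (Fin K)) : ℕ :=
  Set.ncard {u : Fin (K - 1) → Fin K |
    Function.Injective u ∧ Set.range u = ({i} : Set (Fin K))ᶜ ∧
    ∃ j : Fin (K - 1), u j = k ∧ (∀ j' < j, d (u j') ≠ d k) ∧
      (∀ j' ≤ j, (∀ j'' < j', d (u j'') ≠ d (u j')) → u j' ∉ V)}

/-- `b(q, V) = ∑_{d ∈ D_s} ∑_{k ∉ V, d k = q} ∑_{i ∈ V} A(d, i, k, V)`, summing over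
all demand vectors `d` of composition `s`. -/
noncomputable def bCoeff (K N : ℕ) (s : Multiset ℕ) (q : Fin N)
    (V : Finset (Fin K)) : ℕ :=
  ∑ d ∈ Finset.univ.filter
      (fun d : Fin K → Fin N => demandComposition K N d = s),
    ∑ k ∈ (Finset.univ \ V).filter (fun k => d k = q),
      ∑ i ∈ V, numEnum K N d i k V

/-!
Relabel the users by a permutation `σ` and the files by a permutation `π`. Compositions, leader
positions and enumerations are all transported along this relabelling, so the substitution
`d ↦ π ∘ d ∘ σ⁻¹` in the sum over `D_s` gives `b(π q, σ V) = b(q, V)`. Since permutations act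
transitively on subsets of a given cardinality and on files, `b(q, V)` depends only on `|V|`.
-/

section Relabelling

variable {ι α α' β β' : Type*} (σ : α ≃ α') (π : β ≃ β')

theorem card_filter_arrowCongr_eq [Fintype α] [Fintype α'] [DecidableEq β] [DecidableEq β']
    (d : α → β) (q : β) :
    (Finset.univ.filter fun k => σ.arrowCongr π d k = π q).card =
      (Finset.univ.filter fun k => d k = q).card :=
  (Finset.card_equiv σ fun k => by simp).symm

/-- Position `j` of the sequence of users `u` is a leader position for the demand function `d`:
no earlier user of `u` requests the same file. -/
def IsLeader [LT ι] (d : α → β) (u : ι → α) (j : ι) : Prop :=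
  ∀ j' < j, d (u j') ≠ d (u j)

/-- The enumerations counted by `A(d, i, k, V)`: those of all users but `i` in which `k` occupies
a leader position and no element of `V` occupies a leader position up to that of `k`.
Positions are taken in an arbitrary preorder, the case of interest being `Fin (K - 1)`. -/
def leaderEnumerations (ι : Type*) [Preorder ι] (d : α → β) (i k : α) (V : Finset α) :
    Set (ι → α) :=
  {u | Function.Injective u ∧ Set.range u = {i}ᶜ ∧
    ∃ j, u j = k ∧ IsLeader d u j ∧ ∀ j' ≤ j, IsLeader d u j' → u j' ∉ V}

theorem isLeader_arrowCongr_comp_iff [LT ι] (d : α → β) (u : ι → α) (j : ι) :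
    IsLeader (σ.arrowCongr π d) (σ ∘ u) j ↔ IsLeader d u j := by
  simp [IsLeader]

theorem range_comp_eq_compl_singleton_iff (u : ι → α) (i : α) :
    Set.range (σ ∘ u) = {σ i}ᶜ ↔ Set.range u = {i}ᶜ := by
  rw [Set.range_comp, ← Set.image_singleton, ← Set.image_compl_eq σ.bijective,
    σ.injective.image_injective.eq_iff]

theorem comp_mem_leaderEnumerations_iff [Preorder ι] (d : α → β) (i k : α) (V : Finset α)
    (u : ι → α) :
    σ ∘ u ∈ leaderEnumerations ι (σ.arrowCongr π d) (σ i) (σ k) (V.map σ.toEmbedding) ↔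
      u ∈ leaderEnumerations ι d i k V := by
  simp [leaderEnumerations, isLeader_arrowCongr_comp_iff, range_comp_eq_compl_singleton_iff]

theorem ncard_leaderEnumerations_arrowCongr [Preorder ι] (d : α → β) (i k : α) (V : Finset α) :
    (leaderEnumerations ι (σ.arrowCongr π d) (σ i) (σ k) (V.map σ.toEmbedding)).ncard =
      (leaderEnumerations ι d i k V).ncard :=
  .symm <| Set.ncard_congr' <| ((Equiv.refl ι).arrowCongr σ).subtypeEquiv fun u =>
    (comp_mem_leaderEnumerations_iff σ π d i k V u).symm

end Relabelling

theorem numEnum_eq_ncard_leaderEnumerations (K N : ℕ) (d : Fin K → Fin N) (i k : Fin K)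
    (V : Finset (Fin K)) :
    numEnum K N d i k V = (leaderEnumerations (Fin (K - 1)) d i k V).ncard := by
  refine congrArg Set.ncard <| Set.ext fun u =>
    and_congr_right' <| and_congr_right' <| exists_congr fun j => and_congr_right ?_
  rintro rfl
  rfl

section Coefficient

variable {K N : ℕ} (σ : Equiv.Perm (Fin K)) (π : Equiv.Perm (Fin N))

theorem demandComposition_arrowCongr (d : Fin K → Fin N) :
    demandComposition K N (σ.arrowCongr π d) = demandComposition K N d := by
  calc
    demandComposition K N (σ.arrowCongr π d)
        = (Finset.univ.val.map π).map
            fun q => (Finset.univ.filter fun k => σ.arrowCongr π d k = q).card := by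
          rw [Multiset.map_univ_val_equiv, demandComposition]
    _ = demandComposition K N d := by
          simp only [Multiset.map_map, Function.comp_def, card_filter_arrowCongr_eq,
            demandComposition]

theorem numEnum_arrowCongr (d : Fin K → Fin N) (i k : Fin K) (V : Finset (Fin K)) :
    numEnum K N (σ.arrowCongr π d) (σ i) (σ k) (V.map σ.toEmbedding) = numEnum K N d i k V := by
  simp only [numEnum_eq_ncard_leaderEnumerations, ncard_leaderEnumerations_arrowCongr]

theorem bCoeff_map (s : Multiset ℕ) (q : Fin N) (V : Finset (Fin K)) :
    bCoeff K N s (π q) (V.map σ.toEmbedding) = bCoeff K N s q V := by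
  symm
  refine Finset.sum_equiv (σ.arrowCongr π)
    (fun d => by simp only [Finset.mem_filter_univ, demandComposition_arrowCongr]) fun d _ => ?_
  refine Finset.sum_equiv σ (fun k => by simp) fun k _ => ?_
  exact Finset.sum_equiv σ (fun i => by simp) fun i _ => (numEnum_arrowCongr σ π d i k V).symm

end Coefficient

/-- the coefficient `b(q, V)` depends only on the cardinality `|V|`. -/
theorem stmt_13 (K N : ℕ) (hK : 2 ≤ K) (hN : 1 ≤ N) (s : Multiset ℕ)
    (q₁ q₂ : Fin N) (V₁ V₂ : Finset (Fin K))
    (h₁ : V₁.Nonempty) (h₂ : V₂.Nonempty) (hcard : V₁.card = V₂.card) :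
    bCoeff K N s q₁ V₁ = bCoeff K N s q₂ V₂ := by
  obtain ⟨σ, rfl⟩ := Equiv.Perm.exists_map_finset_eq V₁ V₂ hcard
  simpa only [Equiv.swap_apply_left] using (bCoeff_map σ (Equiv.swap q₁ q₂) s q₁ V₁).symm
end
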